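/- Let H be a 2D harmonic fourth-order tensor, let e be a symmetric traceless 2×2 real matrix with Σᵢⱼ (e i j)² = 1, and suppose Σₖₗ H i j k l · e k l = Λ·e i j for all i, j, where Λ ≠ 0. Then H i j k l = 2Λ·(e i j · e k l − ½·J i j k l) for all indices, where J i j k l = ½(δ i k · δ j l + δ i l · δ j k) − ½ δ i j · δ k l. -/

import Mathlib

open Finset

noncomputable section

/-- A fourth-order tensor on `ℝ²`. -/
abbrev Tens4 := Fin 2 → Fin 2 → Fin 2 → Fin 2 → ℝ

/-- Kronecker delta on `Fin 2`. -/
def kdelta (i j : Fin 2) : ℝ := if i = j then 1 else 0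

/-- The isotropic fourth-order tensor `J`. -/
def Jten (i j k l : Fin 2) : ℝ :=
  (kdelta i k * kdelta j l + kdelta i l * kdelta j k) / 2 - kdelta i j * kdelta k l / 2

/-- A 2D elasticity tensor: minor and major index symmetries. -/
def IsElas (C : Tens4) : Prop :=
  (∀ i j k l, C i j k l = C j i k l) ∧ (∀ i j k l, C i j k l = C i j l k) ∧
    (∀ i j k l, C i j k l = C k l i j)

/-- Dilatation tensor `d(C)ᵢⱼ = Σₖ C k k i j`. -/
def dil (C : Tens4) (i j : Fin 2) : ℝ := ∑ k, C k k i j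

/-- Voigt tensor `v(C)ᵢⱼ = Σₖ C k i k j`. -/
def voigt (C : Tens4) (i j : Fin 2) : ℝ := ∑ k, C k i k j

/-- Shear modulus `μ(C)`. -/
def muC (C : Tens4) : ℝ := (2 * ∑ i, voigt C i i - ∑ i, dil C i i) / 8

/-- 2D bulk modulus `κ(C)`. -/
def kappaC (C : Tens4) : ℝ := (∑ i, dil C i i) / 4

/-- Deviatoric part `d'(C)` of the dilatation tensor. -/
def devC (C : Tens4) (i j : Fin 2) : ℝ := dil C i j - (∑ k, dil C k k) / 2 * kdelta i j

/-- Harmonic (fourth-order) part `H(C)` of the elasticity tensor. -/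
def harmC (C : Tens4) (i j k l : Fin 2) : ℝ :=
  C i j k l - 2 * muC C * Jten i j k l - kappaC C * kdelta i j * kdelta k l
    - (kdelta i j * devC C k l + devC C i j * kdelta k l) / 2

/-- A 2D harmonic fourth-order tensor: totally symmetric (invariant under all
permutations of its four indices) and traceless. -/
def IsHarmonic (H : Tens4) : Prop :=
  (∀ (σ : Equiv.Perm (Fin 4)) (v : Fin 4 → Fin 2),
      H (v (σ 0)) (v (σ 1)) (v (σ 2)) (v (σ 3)) = H (v 0) (v 1) (v 2) (v 3)) ∧
    (∀ i j : Fin 2, ∑ k, H k k i j = 0)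

/-!
Identify `ℝ²` with `ℂ` through the basis `z = (1, i)`. A symmetric traceless matrix is then
`e i j = Re (w zᵢ zⱼ)` for a complex number `w`. Each slice `H · · k l` of a harmonic tensor is
such a matrix, and by the symmetry `H i j k l = H k l i j` its complex number is `h z_k z_l` with
`h` independent of `k, l`, so `H i j k l = Re (h zᵢ zⱼ z_k z_l)`; moreover
`J i j k l = Re (zᵢ zⱼ conj (z_k z_l)) / 2`. Contracting `H` with `e` sends `w` to `2 h conj w`, so
the eigentensor equation reads `2 h conj w = Λ w`; multiplying it by `w` gives `h = Λ w²`, because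
`‖e‖² = 2 |w|² = 1`. The formula for `H` is then `2 Re a Re b = Re (a b) + Re (a conj b)` with
`a = w zᵢ zⱼ` and `b = w z_k z_l`.
-/

open scoped ComplexConjugate

/-- The standard basis of `ℝ²`, viewed in `ℂ`. -/
def complexBasis : Fin 2 → ℂ := ![1, Complex.I]

/-- The complex number `w` for which a symmetric traceless matrix `e` is `Re (w zᵢ zⱼ)`, where
`z = complexBasis`; the sign makes `Re (w i) = e 0 1`. -/
def deviatorCoord (e : Matrix (Fin 2) (Fin 2) ℝ) : ℂ := ⟨e 0 0, -e 0 1⟩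

/-- The complex number `h` for which a harmonic tensor `H` is `Re (h zᵢ zⱼ z_k z_l)`, where
`z = complexBasis`; the sign makes `Re (h i) = H 0 0 0 1`. -/
def harmonicCoord (H : Tens4) : ℂ := ⟨H 0 0 0 0, -H 0 0 0 1⟩

theorem two_mul_re_mul_re (a b : ℂ) : 2 * (a.re * b.re) = (a * b).re + (a * conj b).re := by
  simp only [Complex.mul_re, Complex.conj_re, Complex.conj_im]
  ring

theorem eq_of_re_mul_complexBasis_eq {a b : ℂ}
    (h : ∀ i, (a * complexBasis i).re = (b * complexBasis i).re) : a = b := by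
  have hre : a.re = b.re := by simpa [complexBasis] using h 0
  have him : a.im = b.im := by simpa [complexBasis] using h 1
  exact Complex.ext hre him

theorem Jten_eq_re (i j k l : Fin 2) :
    Jten i j k l =
      (complexBasis i * complexBasis j * conj (complexBasis k * complexBasis l)).re / 2 := by
  fin_cases i <;> fin_cases j <;> fin_cases k <;> fin_cases l <;>
    norm_num [Jten, kdelta, complexBasis]

theorem apply_one_one_of_trace_eq_zero {R : Type*} [AddCommGroup R] {e : Matrix (Fin 2) (Fin 2) R}
    (htr : e.trace = 0) : e 1 1 = -e 0 0 :=
  eq_neg_of_add_eq_zero_right ((Matrix.trace_fin_two e).symm.trans htr)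

section Deviator

variable {e : Matrix (Fin 2) (Fin 2) ℝ} (hsym : e.IsSymm) (htr : e.trace = 0)

include hsym htr

theorem eq_re_deviatorCoord_mul (i j : Fin 2) :
    e i j = (deviatorCoord e * (complexBasis i * complexBasis j)).re := by
  fin_cases i <;> fin_cases j <;>
    simp [deviatorCoord, complexBasis, hsym.apply 0 1, apply_one_one_of_trace_eq_zero htr]

theorem sum_sq_eq_two_mul_normSq_deviatorCoord :
    ∑ i, ∑ j, e i j ^ 2 = 2 * Complex.normSq (deviatorCoord e) := by
  simp only [Fin.sum_univ_two, hsym.apply 0 1, apply_one_one_of_trace_eq_zero htr,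
    deviatorCoord, Complex.normSq_mk]
  ring

theorem sum_complexBasis_mul_eq_two_mul_conj_deviatorCoord :
    ∑ k, ∑ l, complexBasis k * complexBasis l * e k l = 2 * conj (deviatorCoord e) := by
  rw [← Complex.re_add_im (conj (deviatorCoord e))]
  simp only [Fin.sum_univ_two, hsym.apply 0 1, apply_one_one_of_trace_eq_zero htr,
    complexBasis, Matrix.cons_val_zero, Matrix.cons_val_one, deviatorCoord, Complex.conj_re,
    Complex.conj_im, Complex.ofReal_neg, neg_neg]
  linear_combination -(e 0 0 : ℂ) * Complex.I_mul_I

end Deviator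

namespace IsHarmonic

variable {H : Tens4} (hH : IsHarmonic H)

include hH

theorem swap_first (i j k l : Fin 2) : H j i k l = H i j k l :=
  hH.1 (Equiv.swap 0 1) ![i, j, k, l]

theorem swap_middle (i j k l : Fin 2) : H i k j l = H i j k l :=
  hH.1 (Equiv.swap 1 2) ![i, j, k, l]

theorem swap_last (i j k l : Fin 2) : H i j l k = H i j k l :=
  hH.1 (Equiv.swap 2 3) ![i, j, k, l]

theorem swap_pairs (i j k l : Fin 2) : H k l i j = H i j k l := by
  rw [hH.swap_middle k i l j, hH.swap_first i k l j, hH.swap_last i k j l, hH.swap_middle i j k l]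

theorem isSymm_slice (k l : Fin 2) : (Matrix.of fun i j ↦ H i j k l).IsSymm :=
  Matrix.IsSymm.ext fun i j ↦ hH.swap_first i j k l

theorem trace_slice (k l : Fin 2) : (Matrix.of fun i j ↦ H i j k l).trace = 0 :=
  hH.2 k l

theorem apply_one_one (k l : Fin 2) : H 1 1 k l = -H 0 0 k l :=
  apply_one_one_of_trace_eq_zero (hH.trace_slice k l)

theorem eq_re_deviatorCoord_slice_mul (i j k l : Fin 2) :
    H i j k l =
      (deviatorCoord (Matrix.of fun i j ↦ H i j k l) * (complexBasis i * complexBasis j)).re :=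
  eq_re_deviatorCoord_mul (hH.isSymm_slice k l) (hH.trace_slice k l) i j

theorem deviatorCoord_slice_zero_zero :
    deviatorCoord (Matrix.of fun i j ↦ H i j 0 0) = harmonicCoord H := by
  simp only [deviatorCoord, harmonicCoord, Matrix.of_apply, hH.swap_pairs 0 0 0 1]

theorem deviatorCoord_slice_zero_one :
    deviatorCoord (Matrix.of fun i j ↦ H i j 0 1) = Complex.I * harmonicCoord H := by
  have h0101 : H 0 1 0 1 = -H 0 0 0 0 := by
    rw [hH.swap_middle 0 0 1 1, hH.swap_pairs 1 1 0 0, hH.apply_one_one]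
  apply Complex.ext <;> simp [deviatorCoord, harmonicCoord, h0101]

theorem deviatorCoord_slice (k l : Fin 2) :
    deviatorCoord (Matrix.of fun i j ↦ H i j k l) =
      harmonicCoord H * (complexBasis k * complexBasis l) := by
  apply Complex.ext
  · change H 0 0 k l = _
    rw [← hH.swap_pairs 0 0 k l, hH.eq_re_deviatorCoord_slice_mul,
      hH.deviatorCoord_slice_zero_zero]
  · change -H 0 1 k l = _
    rw [← hH.swap_pairs 0 1 k l, hH.eq_re_deviatorCoord_slice_mul,
      hH.deviatorCoord_slice_zero_one, mul_assoc, Complex.I_mul_re, neg_neg]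

theorem eq_re_harmonicCoord_mul (i j k l : Fin 2) :
    H i j k l = (harmonicCoord H *
      (complexBasis i * complexBasis j * (complexBasis k * complexBasis l))).re := by
  rw [hH.eq_re_deviatorCoord_slice_mul, hH.deviatorCoord_slice, mul_assoc,
    mul_comm (complexBasis k * complexBasis l)]

theorem sum_mul_eq_re {e : Matrix (Fin 2) (Fin 2) ℝ} (hsym : e.IsSymm) (htr : e.trace = 0)
    (i j : Fin 2) :
    ∑ k, ∑ l, H i j k l * e k l =
      (2 * harmonicCoord H * conj (deviatorCoord e) * (complexBasis i * complexBasis j)).re := by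
  calc ∑ k, ∑ l, H i j k l * e k l
    _ = (harmonicCoord H * (complexBasis i * complexBasis j) *
          ∑ k, ∑ l, complexBasis k * complexBasis l * e k l).re := by
      simp only [hH.eq_re_harmonicCoord_mul i j, ← Complex.re_mul_ofReal, Complex.re_sum,
        Finset.mul_sum, mul_assoc]
    _ = (2 * harmonicCoord H * conj (deviatorCoord e) *
          (complexBasis i * complexBasis j)).re := by
      rw [sum_complexBasis_mul_eq_two_mul_conj_deviatorCoord hsym htr]
      ring_nf

theorem two_mul_harmonicCoord_mul_conj_deviatorCoord {e : Matrix (Fin 2) (Fin 2) ℝ}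
    (hsym : e.IsSymm) (htr : e.trace = 0) {lam : ℝ}
    (heig : ∀ i j, ∑ k, ∑ l, H i j k l * e k l = lam * e i j) :
    2 * harmonicCoord H * conj (deviatorCoord e) = lam * deviatorCoord e := by
  refine eq_of_re_mul_complexBasis_eq fun i ↦ ?_
  have h := heig 0 i
  rw [hH.sum_mul_eq_re hsym htr, eq_re_deviatorCoord_mul hsym htr, ← Complex.re_ofReal_mul] at h
  simpa [complexBasis, mul_assoc] using h

theorem sum_sq_mul_harmonicCoord {e : Matrix (Fin 2) (Fin 2) ℝ}
    (hsym : e.IsSymm) (htr : e.trace = 0) {lam : ℝ}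
    (heig : ∀ i j, ∑ k, ∑ l, H i j k l * e k l = lam * e i j) :
    (∑ i, ∑ j, e i j ^ 2 : ℝ) * harmonicCoord H = lam * deviatorCoord e ^ 2 := by
  rw [sum_sq_eq_two_mul_normSq_deviatorCoord hsym htr, Complex.ofReal_mul, Complex.ofReal_ofNat,
    ← Complex.mul_conj]
  linear_combination
    deviatorCoord e * hH.two_mul_harmonicCoord_mul_conj_deviatorCoord hsym htr heig

end IsHarmonic

/-- If a unit symmetric traceless `2×2` matrix `e` is an eigentensor
of a 2D harmonic fourth-order tensor `H` with nonzero eigenvalue `Λ`, then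
`H = 2Λ (e ⊗ e − ½ J)`. -/
theorem harmonic_eq_of_eigentensor (H : Tens4) (hH : IsHarmonic H)
    (e : Matrix (Fin 2) (Fin 2) ℝ) (hsym : ∀ i j, e i j = e j i)
    (htr : e 0 0 + e 1 1 = 0) (hnorm : ∑ i, ∑ j, (e i j) ^ 2 = 1)
    (lam : ℝ) (hlam : lam ≠ 0)
    (heig : ∀ i j, (∑ k, ∑ l, H i j k l * e k l) = lam * e i j) :
    ∀ i j k l, H i j k l = 2 * lam * (e i j * e k l - Jten i j k l / 2) := by
  intro i j k l
  have he : e.IsSymm := Matrix.IsSymm.ext fun i j ↦ hsym j i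
  have htrace : e.trace = 0 := (Matrix.trace_fin_two e).trans htr
  set w := deviatorCoord e
  set a := complexBasis i * complexBasis j
  set b := complexBasis k * complexBasis l
  have hcoord : harmonicCoord H = lam * w ^ 2 := by
    simpa only [hnorm, Complex.ofReal_one, one_mul] using
      hH.sum_sq_mul_harmonicCoord he htrace heig
  have hw : Complex.normSq w = 1 / 2 := by
    linarith [sum_sq_eq_two_mul_normSq_deviatorCoord he htrace]
  have hconj : (w * a * conj (w * b)).re = Jten i j k l := by
    rw [map_mul, mul_mul_mul_comm, Complex.mul_conj, Complex.re_ofReal_mul, hw, Jten_eq_re]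
    ring
  calc H i j k l
    _ = lam * (w * a * (w * b)).re := by
      rw [hH.eq_re_harmonicCoord_mul, hcoord, ← Complex.re_ofReal_mul,
        mul_mul_mul_comm w a, ← pow_two, mul_assoc]
    _ = lam * (2 * (e i j * e k l) - Jten i j k l) := by
      rw [eq_re_deviatorCoord_mul he htrace i j, eq_re_deviatorCoord_mul he htrace k l,
        two_mul_re_mul_re, hconj, add_sub_cancel_right]
    _ = 2 * lam * (e i j * e k l - Jten i j k l / 2) := by ring
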